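/- With κ as defined, for every real t that is not a multiple zero of Z, π·κ'(t) = (Z(t)·Z'(t)·ϑ''(t) + Z'(t)²·ϑ'(t) − Z(t)·Z''(t)·ϑ'(t)) / (Z'(t)² + Z(t)²·ϑ'(t)²). -/

import Mathlib

open Complex Real

section helpers

lemma aux_artanh (v : ℝ) (h0 : 0 ≤ v) (h1 : v < 1) :
    2 * v ≤ Real.log (1 + v) - Real.log (1 - v) ∧
    Real.log (1 + v) - Real.log (1 - v) ≤ 2 * (v / (1 - v ^ 2)) := by
  have h := Real.hasSum_log_sub_log_of_abs_lt_one (x := v) (by rw [abs_of_nonneg h0]; exact h1)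
  constructor
  · have := le_hasSum h 0 (fun j _ => by positivity)
    simpa using this
  · have hv2 : v ^ 2 < 1 := by nlinarith
    have hg := (hasSum_geometric_of_lt_one (sq_nonneg v) hv2).mul_left (2 * v)
    have := hasSum_le (fun k : ℕ => ?_) h hg
    · rw [mul_div_assoc'] ; rwa [← div_eq_mul_inv] at this
    · have : v ^ (2 * k + 1) = v * (v ^ 2) ^ k := by rw [pow_succ, pow_mul]; ring
      rw [this]
      have h3 : (1 / (2 * (k : ℝ) + 1)) ≤ 1 := by
        rw [div_le_one (by positivity)]; linarith [(Nat.cast_nonneg k : (0:ℝ) ≤ k)]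
      have h4 : 0 ≤ v * (v ^ 2) ^ k := by positivity
      nlinarith

lemma aux_log_diff (A u : ℝ) (hu : 0 ≤ u) (hA : u < A) :
    Real.log (A + u) - Real.log (A - u) = Real.log (1 + u / A) - Real.log (1 - u / A) := by
  have hA0 : 0 < A := by linarith
  have e1 : A + u = A * (1 + u / A) := by field_simp
  have e2 : A - u = A * (1 - u / A) := by field_simp
  have : u / A < 1 := by rw [div_lt_one hA0]; exact hA
  have h2 : 0 ≤ u / A := by positivity
  rw [e1, e2, Real.log_mul hA0.ne' (by linarith), Real.log_mul hA0.ne' (by linarith)]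
  ring

lemma aux_g_le (u b : ℝ) (hu : 0 ≤ u) (hb : 1 / 4 < b) :
    u / (u ^ 2 + b) ≤ Real.log ((u + 1 / 2) ^ 2 + b - 1 / 4) / 2
      - Real.log ((u - 1 / 2) ^ 2 + b - 1 / 4) / 2 := by
  have hA : u < u ^ 2 + b := by nlinarith [sq_nonneg (u - 1 / 2)]
  have e1 : (u + 1 / 2) ^ 2 + b - 1 / 4 = (u ^ 2 + b) + u := by ring
  have e2 : (u - 1 / 2) ^ 2 + b - 1 / 4 = (u ^ 2 + b) - u := by ring
  have h := aux_log_diff _ u hu hA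
  have h2 := (aux_artanh (u / (u ^ 2 + b)) (by positivity)
    (by rw [div_lt_one (by linarith)]; exact hA)).1
  rw [e1, e2]; linarith

lemma aux_le_g (u b : ℝ) (hu : 0 < u) (hb : 0 ≤ b) :
    Real.log ((u + 1 / 2) ^ 2 + b + 3 / 4) / 2
      - Real.log ((u - 1 / 2) ^ 2 + b + 3 / 4) / 2 ≤ u / (u ^ 2 + b) := by
  have hA : u < u ^ 2 + b + 1 := by nlinarith [sq_nonneg (u - 1 / 2)]
  have e1 : (u + 1 / 2) ^ 2 + b + 3 / 4 = (u ^ 2 + b + 1) + u := by ring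
  have e2 : (u - 1 / 2) ^ 2 + b + 3 / 4 = (u ^ 2 + b + 1) - u := by ring
  have h := aux_log_diff _ u hu.le hA
  have hA0 : 0 < u ^ 2 + b + 1 := by positivity
  have h2 := (aux_artanh (u / (u ^ 2 + b + 1)) (by positivity)
    (by rw [div_lt_one (by linarith)]; exact hA)).2
  rw [e1, e2]
  have h3 : u / (u ^ 2 + b + 1) / (1 - (u / (u ^ 2 + b + 1)) ^ 2) ≤ u / (u ^ 2 + b) := by
    have e : u / (u ^ 2 + b + 1) / (1 - (u / (u ^ 2 + b + 1)) ^ 2)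
      = u * (u ^ 2 + b + 1) / ((u ^ 2 + b + 1) ^ 2 - u ^ 2) := by
      have : (u ^ 2 + b + 1) ^ 2 - u ^ 2 ≠ 0 := by nlinarith
      have h' : 1 - (u / (u ^ 2 + b + 1)) ^ 2 ≠ 0 := by
        intro h0
        apply this
        field_simp at h0
        linarith
      field_simp
    rw [e, div_le_div_iff₀ (by nlinarith) (by positivity)]
    have : 0 ≤ b + 1 := by linarith
    nlinarith [mul_nonneg hu.le this, mul_pos hu hu]
  linarith

/-- log of the modulus of `GammaSeq` -/
noncomputable def logGS (y : ℝ) (n : ℕ) (x : ℝ) : ℝ :=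
  x * Real.log n + Real.log (n.factorial : ℝ)
    - ∑ j ∈ Finset.range (n + 1), Real.log ((x + j) ^ 2 + y ^ 2) / 2

lemma logGS_eq (y : ℝ) (n : ℕ) (hn : 0 < n) (x : ℝ) (hx : 0 < x) :
    Real.log ‖Complex.GammaSeq (x + y * Complex.I) n‖ = logGS y n x := by
  have hne : ∀ j : ℕ, (x + y * Complex.I + j : ℂ) ≠ 0 := by
    intro j h
    have := congrArg Complex.re h
    simp at this
    have h2 : (0:ℝ) ≤ j := Nat.cast_nonneg j
    linarith
  have hn' : (0:ℝ) < n := by exact_mod_cast hn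
  have hnorm : ∀ j : ℕ, Real.log ‖(x + y * Complex.I + j : ℂ)‖
      = Real.log ((x + j) ^ 2 + y ^ 2) / 2 := by
    intro j
    rw [Complex.norm_def, Real.log_sqrt (Complex.normSq_nonneg _), Complex.normSq_apply]
    simp; ring_nf
  unfold Complex.GammaSeq logGS
  rw [norm_div, norm_mul, norm_prod, Real.log_div, Real.log_mul, Real.log_prod]
  · rw [Finset.sum_congr rfl (fun j _ => hnorm j)]
    have : ‖((n:ℂ)) ^ (x + y * Complex.I : ℂ)‖ = (n:ℝ) ^ x := by
      have := Complex.norm_cpow_eq_rpow_re_of_pos hn' (x + y * Complex.I)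
      simpa using this
    rw [this, Real.log_rpow hn']
    simp
  · intro j _; simpa using hne j
  · have := Complex.norm_cpow_eq_rpow_re_of_pos hn' (x + y * Complex.I)
    rw [Complex.ofReal_natCast] at this
    rw [this]; positivity
  · simpa using Nat.factorial_ne_zero n
  · have := Complex.norm_cpow_eq_rpow_re_of_pos hn' (x + y * Complex.I)
    rw [Complex.ofReal_natCast] at this
    rw [this]
    have h2 : ‖((n.factorial : ℕ) : ℂ)‖ ≠ 0 := by simpa using Nat.factorial_ne_zero n
    have h3 : (n:ℝ) ^ (x + y * Complex.I : ℂ).re ≠ 0 := by positivity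
    exact mul_ne_zero h3 h2
  · rw [Finset.prod_ne_zero_iff]; intro j _; simpa using hne j

lemma logGS_hasDerivAt (y : ℝ) (n : ℕ) (x : ℝ) (hx : 0 < x) :
    HasDerivAt (logGS y n) (Real.log n
      - ∑ j ∈ Finset.range (n + 1), (x + j) / ((x + j) ^ 2 + y ^ 2)) x := by
  unfold logGS
  have h1 : HasDerivAt (fun x : ℝ => ∑ j ∈ Finset.range (n + 1),
      Real.log ((x + j) ^ 2 + y ^ 2) / 2)
      (∑ j ∈ Finset.range (n + 1), (x + j) / ((x + j) ^ 2 + y ^ 2)) x := by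
    apply HasDerivAt.fun_sum
    intro j _
    have h0 : (x + j) ^ 2 + y ^ 2 ≠ 0 := by positivity
    have := ((((hasDerivAt_id x).add_const (j:ℝ)).pow 2).add_const (y ^ 2)).log h0
    convert! this.div_const 2 using 1
    simp; field_simp
  have h2 := (((hasDerivAt_id x).mul_const (Real.log n)).add_const
    (Real.log (n.factorial : ℝ))).sub h1
  convert! h2 using 1
  simp

open Filter Topology

lemma tendsto_log_aux (K : ℝ) : Tendsto (fun n : ℕ => Real.log n -
    Real.log (((n : ℝ) + 1) ^ 2 + K) / 2) atTop (𝓝 0) := by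
  have h : Tendsto (fun n : ℕ => -(Real.log ((1 + (n:ℝ)⁻¹) ^ 2 + K * ((n:ℝ)⁻¹) ^ 2) / 2))
      atTop (𝓝 (-(Real.log ((1 + 0) ^ 2 + K * 0 ^ 2) / 2))) := by
    have hi := tendsto_inv_atTop_nhds_zero_nat (𝕜 := ℝ)
    have h1 : Tendsto (fun n : ℕ => (1 + (n:ℝ)⁻¹) ^ 2 + K * ((n:ℝ)⁻¹) ^ 2) atTop
        (𝓝 ((1 + 0) ^ 2 + K * 0 ^ 2)) :=
      ((hi.const_add 1).pow 2).add ((hi.pow 2).const_mul K)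
    exact ((h1.log (by norm_num)).div_const 2).neg
  have h0 : (-(Real.log ((1 + 0) ^ 2 + K * 0 ^ 2) / 2)) = 0 := by norm_num
  rw [h0] at h
  refine h.congr' ?_
  have hev : ∀ᶠ n : ℕ in atTop, 0 < (1 + (n:ℝ)⁻¹) ^ 2 + K * ((n:ℝ)⁻¹) ^ 2 := by
    have hi := tendsto_inv_atTop_nhds_zero_nat (𝕜 := ℝ)
    have h1 : Tendsto (fun n : ℕ => (1 + (n:ℝ)⁻¹) ^ 2 + K * ((n:ℝ)⁻¹) ^ 2) atTop
        (𝓝 ((1 + 0) ^ 2 + K * 0 ^ 2)) :=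
      ((hi.const_add 1).pow 2).add ((hi.pow 2).const_mul K)
    exact h1.eventually (lt_mem_nhds (by norm_num))
  filter_upwards [hev, eventually_gt_atTop 0] with n h1 hn
  have hn' : (0:ℝ) < n := by exact_mod_cast hn
  have e : ((n : ℝ) + 1) ^ 2 + K = n ^ 2 * ((1 + (n:ℝ)⁻¹) ^ 2 + K * ((n:ℝ)⁻¹) ^ 2) := by
    field_simp
  rw [e, Real.log_mul (by positivity) h1.ne', Real.log_pow]
  push_cast; ring

lemma logGS_lower (y : ℝ) (hy : 1 / 4 < y ^ 2) (n : ℕ) (x : ℝ) (hx : x ∈ Set.Icc (1/4 : ℝ) (1/2)) :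
    (Real.log n - Real.log (((n : ℝ) + 1) ^ 2 + (y ^ 2 - 1 / 4)) / 2)
      + Real.log (y ^ 2 - 1 / 4) / 2 ≤
    Real.log n - ∑ j ∈ Finset.range (n + 1), (x + j) / ((x + j) ^ 2 + y ^ 2) := by
  obtain ⟨hx1, hx2⟩ := hx
  obtain ⟨f, hf⟩ : ∃ f : ℕ → ℝ, ∀ k, f k =
    Real.log ((x + k - 1 / 2) ^ 2 + y ^ 2 - 1 / 4) / 2 := ⟨_, fun _ => rfl⟩
  have h1 : ∑ j ∈ Finset.range (n + 1), (x + j) / ((x + j) ^ 2 + y ^ 2) ≤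
      ∑ j ∈ Finset.range (n + 1), (f (j + 1) - f j) := by
    apply Finset.sum_le_sum
    intro j _
    have := aux_g_le (x + j) (y ^ 2) (by positivity) hy
    rw [hf, hf]
    have e : x + ((j + 1 : ℕ) : ℝ) - 1 / 2 = x + j + 1 / 2 := by push_cast; ring
    rw [e]; exact this
  rw [Finset.sum_range_sub, hf, hf] at h1
  have h2 : Real.log ((x + ((n + 1 : ℕ) : ℝ) - 1 / 2) ^ 2 + y ^ 2 - 1 / 4) ≤
      Real.log (((n : ℝ) + 1) ^ 2 + (y ^ 2 - 1 / 4)) := by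
    apply Real.log_le_log
    · nlinarith [sq_nonneg (x + ((n + 1 : ℕ) : ℝ) - 1 / 2)]
    · push_cast
      have : (0:ℝ) ≤ n := Nat.cast_nonneg n
      nlinarith
  have h3 : Real.log (y ^ 2 - 1 / 4) ≤ Real.log ((x + ((0 : ℕ) : ℝ) - 1 / 2) ^ 2 + y ^ 2 - 1 / 4) := by
    apply Real.log_le_log (by linarith)
    nlinarith [sq_nonneg (x + ((0 : ℕ) : ℝ) - 1 / 2)]
  linarith

lemma logGS_upper (y : ℝ) (n : ℕ) (hn : 0 < n) (x : ℝ) (hx : x ∈ Set.Icc (1/4 : ℝ) (1/2)) :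
    Real.log n - ∑ j ∈ Finset.range (n + 1), (x + j) / ((x + j) ^ 2 + y ^ 2) ≤
      Real.log (y ^ 2 + 13 / 16) / 2 := by
  obtain ⟨hx1, hx2⟩ := hx
  obtain ⟨f, hf⟩ : ∃ f : ℕ → ℝ, ∀ k, f k =
    Real.log ((x + k - 1 / 2) ^ 2 + y ^ 2 + 3 / 4) / 2 := ⟨_, fun _ => rfl⟩
  have h1 : ∑ j ∈ Finset.range (n + 1), (f (j + 1) - f j) ≤
      ∑ j ∈ Finset.range (n + 1), (x + j) / ((x + j) ^ 2 + y ^ 2) := by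
    apply Finset.sum_le_sum
    intro j _
    have := aux_le_g (x + j) (y ^ 2) (by positivity) (by positivity)
    rw [hf, hf]
    have e : x + ((j + 1 : ℕ) : ℝ) - 1 / 2 = x + j + 1 / 2 := by push_cast; ring
    rw [e]; exact this
  rw [Finset.sum_range_sub, hf, hf] at h1
  have hn' : (0:ℝ) < n := by exact_mod_cast hn
  have h2 : Real.log ((n:ℝ) ^ 2) ≤
      Real.log ((x + ((n + 1 : ℕ) : ℝ) - 1 / 2) ^ 2 + y ^ 2 + 3 / 4) := by
    apply Real.log_le_log (by positivity)
    push_cast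
    nlinarith [sq_nonneg y]
  rw [Real.log_pow] at h2
  push_cast at h2 h1
  have h3 : Real.log ((x + 0 - 1 / 2) ^ 2 + y ^ 2 + 3 / 4) ≤ Real.log (y ^ 2 + 13 / 16) := by
    apply Real.log_le_log (by positivity)
    nlinarith
  linarith

lemma logGamma_tendsto (y x : ℝ) (hx : 0 < x) : Tendsto (fun n => logGS y n x) atTop
    (𝓝 (Real.log ‖Complex.Gamma (x + y * Complex.I)‖)) := by
  have h := (Complex.GammaSeq_tendsto_Gamma (x + y * Complex.I)).norm
  have hne : ‖Complex.Gamma (x + y * Complex.I)‖ ≠ 0 := by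
    rw [norm_ne_zero_iff]
    exact Complex.Gamma_ne_zero_of_re_pos (by simpa using hx)
  refine (h.log hne).congr' ?_
  filter_upwards [eventually_gt_atTop 0] with n hn
  exact logGS_eq y n hn x hx

lemma logGamma_lower (y : ℝ) (hy : 1 / 4 < y ^ 2) (x : ℝ) (hx : x ∈ Set.Icc (1/4 : ℝ) (1/2)) :
    Real.log (y ^ 2 - 1 / 4) / 2 * (x - 1 / 4) ≤
      Real.log ‖Complex.Gamma (x + y * Complex.I)‖
        - Real.log ‖Complex.Gamma ((1 / 4 : ℝ) + y * Complex.I)‖ := by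
  have h1 := (logGamma_tendsto y x (by linarith [hx.1])).sub
    (logGamma_tendsto y (1 / 4) (by norm_num))
  have h2 := ((tendsto_log_aux (y ^ 2 - 1 / 4)).add_const
    (Real.log (y ^ 2 - 1 / 4) / 2)).mul_const (x - 1 / 4)
  rw [zero_add] at h2
  refine le_of_tendsto_of_tendsto' h2 h1 (fun n => ?_)
  have hd : ∀ z ∈ Set.Icc (1/4 : ℝ) (1/2), HasDerivAt (logGS y n) _ z :=
    fun z hz => logGS_hasDerivAt y n z (by linarith [hz.1])
  refine (convex_Icc (1/4 : ℝ) (1/2)).mul_sub_le_image_sub_of_le_deriv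
    (fun z hz => (hd z hz).continuousAt.continuousWithinAt)
    (fun z hz => (hd z (interior_subset hz)).differentiableAt.differentiableWithinAt)
    (fun z hz => ?_) (1 / 4) (by norm_num) x hx hx.1
  rw [(hd z (interior_subset hz)).deriv]
  exact logGS_lower y hy n z (interior_subset hz)

lemma logGamma_upper (y : ℝ) (x : ℝ) (hx : x ∈ Set.Icc (1/4 : ℝ) (1/2)) :
      Real.log ‖Complex.Gamma (x + y * Complex.I)‖
        - Real.log ‖Complex.Gamma ((1 / 4 : ℝ) + y * Complex.I)‖ ≤
    Real.log (y ^ 2 + 13 / 16) / 2 * (x - 1 / 4) := by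
  have h1 := (logGamma_tendsto y x (by linarith [hx.1])).sub
    (logGamma_tendsto y (1 / 4) (by norm_num))
  refine le_of_tendsto h1 ?_
  filter_upwards [eventually_gt_atTop 0] with n hn
  have hd : ∀ z ∈ Set.Icc (1/4 : ℝ) (1/2), HasDerivAt (logGS y n) _ z :=
    fun z hz => logGS_hasDerivAt y n z (by linarith [hz.1])
  refine (convex_Icc (1/4 : ℝ) (1/2)).image_sub_le_mul_sub_of_deriv_le
    (fun z hz => (hd z hz).continuousAt.continuousWithinAt)
    (fun z hz => (hd z (interior_subset hz)).differentiableAt.differentiableWithinAt)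
    (fun z hz => ?_) (1 / 4) (by norm_num) x hx hx.1
  rw [(hd z (interior_subset hz)).deriv]
  exact logGS_upper y n hn z (interior_subset hz)

lemma logGamma_hasDerivAt (y : ℝ) :
    HasDerivAt (fun x : ℝ => Real.log ‖Complex.Gamma (x + y * Complex.I)‖)
      (Complex.digamma ((1 / 4 : ℝ) + y * Complex.I)).re (1 / 4) := by
  set s0 : ℂ := (1 / 4 : ℝ) + y * Complex.I with hs0
  have hpos : ∀ x : ℝ, 0 < x → Complex.Gamma (x + y * Complex.I) ≠ 0 := fun x hx =>
    Complex.Gamma_ne_zero_of_re_pos (by simpa using hx)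
  have hne : Complex.Gamma s0 ≠ 0 := hpos _ (by norm_num)
  have hG : HasDerivAt Complex.Gamma (deriv Complex.Gamma s0) s0 := by
    refine (Complex.differentiableAt_Gamma s0 (fun m h => ?_)).hasDerivAt
    have := congrArg Complex.re h
    simp [hs0] at this
    have h2 : (0:ℝ) ≤ m := Nat.cast_nonneg m
    linarith
  have h1 : HasDerivAt (fun z : ℂ => Complex.Gamma (z + y * Complex.I)) (deriv Complex.Gamma s0)
      ((1 / 4 : ℝ) : ℂ) := by
    exact HasDerivAt.comp_add_const _ _ hG
  have h2 := (h1.div_const (Complex.Gamma s0)).clog (by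
    rw [← hs0, div_self hne]; exact Complex.one_mem_slitPlane)
  have h3 := h2.real_of_complex
  have h4 := h3.add_const (Real.log ‖Complex.Gamma s0‖)
  rw [← hs0, div_self hne, div_one] at h4
  have h5 : deriv Complex.Gamma s0 / Complex.Gamma s0 = Complex.digamma s0 := rfl
  rw [h5] at h4
  refine h4.congr_of_eventuallyEq ?_
  filter_upwards [lt_mem_nhds (show (0:ℝ) < 1 / 4 by norm_num)] with x hx
  rw [Complex.log_re, norm_div, Real.log_div (norm_ne_zero_iff.2 (hpos x hx))
    (norm_ne_zero_iff.2 hne)]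
  ring

lemma deriv_ge_of_le {f : ℝ → ℝ} {f' c : ℝ} (hf : HasDerivAt f f' (1 / 4))
    (h : ∀ x ∈ Set.Icc (1/4 : ℝ) (1/2), c * (x - 1 / 4) ≤ f x - f (1 / 4)) : c ≤ f' := by
  have h1 := (hasDerivWithinAt_iff_tendsto_slope' (by simp)).1
    (hf.hasDerivWithinAt (s := Set.Ioi (1/4)))
  refine ge_of_tendsto h1 ?_
  filter_upwards [Ioc_mem_nhdsGT (show (1/4 : ℝ) < 1 / 2 by norm_num)] with x hx
  rw [slope_def_field, le_div_iff₀ (by linarith [hx.1])]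
  exact h x ⟨hx.1.le, hx.2⟩

lemma digamma_lower (y : ℝ) (hy : 1 / 4 < y ^ 2) :
    Real.log (y ^ 2 - 1 / 4) / 2 ≤ (Complex.digamma ((1 / 4 : ℝ) + y * Complex.I)).re :=
  deriv_ge_of_le (logGamma_hasDerivAt y) (fun x hx => logGamma_lower y hy x hx)

lemma digamma_upper (y : ℝ) :
    (Complex.digamma ((1 / 4 : ℝ) + y * Complex.I)).re ≤ Real.log (y ^ 2 + 13 / 16) / 2 := by
  have := deriv_ge_of_le (logGamma_hasDerivAt y).neg (c := -(Real.log (y ^ 2 + 13 / 16) / 2))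
    (fun x hx => by
      have := logGamma_upper y x hx
      simp only [Pi.neg_apply]
      linarith)
  linarith

lemma digamma_window (y : ℝ)
    (h : (Complex.digamma ((1 / 4 : ℝ) + y * Complex.I)).re = Real.log π) :
    π ^ 2 - 13 / 16 ≤ y ^ 2 ∧ y ^ 2 ≤ π ^ 2 + 1 / 4 := by
  have hp : Real.log π = Real.log (π ^ 2) / 2 := by rw [Real.log_pow]; push_cast; ring
  constructor
  · have := digamma_upper y
    rw [h, hp] at this
    have h2 := (Real.log_le_log_iff (by positivity) (by positivity)).1
      (show Real.log (π ^ 2) ≤ Real.log (y ^ 2 + 13 / 16) by linarith)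
    linarith
  · by_contra! hc
    have := digamma_lower y (by nlinarith [Real.pi_pos])
    rw [h, hp] at this
    have h2 := (Real.log_le_log_iff (by nlinarith [Real.pi_pos]) (by positivity)).1
      (show Real.log (y ^ 2 - 1 / 4) ≤ Real.log (π ^ 2) by linarith)
    linarith

/-- A zero of `ζ'` on the critical line that is not a zero of `ζ` lies near height `2π`. -/
lemma zeta_window (t : ℝ) (h0 : riemannZeta (1 / 2 + Complex.I * t) ≠ 0)
    (h1 : deriv riemannZeta (1 / 2 + Complex.I * t) = 0) :
    4 * π ^ 2 - 13 / 4 ≤ t ^ 2 ∧ t ^ 2 ≤ 4 * π ^ 2 + 1 := by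
  set s : ℂ := 1 / 2 + Complex.I * t with hs
  have hre : s.re = 1 / 2 := by simp [hs]
  have hconj : 1 - s = (starRingEnd ℂ) s := by
    apply Complex.ext <;> simp [hs] <;> norm_num
  have hre' : (1 - s).re = 1 / 2 := by simp [hre]; norm_num
  have ne1 : ∀ z : ℂ, z.re = 1 / 2 → z ≠ 1 := by
    rintro z hz rfl; norm_num at hz
  have ne0 : ∀ z : ℂ, z.re = 1 / 2 → z ≠ 0 := by
    rintro z hz rfl; norm_num at hz
  have hG : ∀ z : ℂ, 0 < z.re → DifferentiableAt ℂ Complex.Gamma z := by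
    intro z hz
    refine Complex.differentiableAt_Gamma z (fun m h => ?_)
    have := congrArg Complex.re h
    simp at this
    have h2 : (0:ℝ) ≤ m := Nat.cast_nonneg m
    linarith
  have hGR : ∀ z : ℂ, 0 < z.re → HasDerivAt Complex.Gammaℝ
      (Complex.Gammaℝ z * ((Complex.digamma (z / 2) - Real.log π) / 2)) z := by
    intro z hz
    have hz2 : 0 < (z / 2).re := by simp; linarith
    have a1 : HasDerivAt (fun w : ℂ => -w / 2) (-1 / 2) z := ((hasDerivAt_id z).neg).div_const 2
    have a2 := a1.const_cpow (c := (π : ℂ)) (Or.inl (by exact_mod_cast Real.pi_ne_zero))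
    have a3 : HasDerivAt (fun w : ℂ => w / 2) (1 / 2) z := (hasDerivAt_id z).div_const 2
    have a4 := HasDerivAt.comp z (hG _ hz2).hasDerivAt a3
    have a5 := a2.mul a4
    have e : Complex.digamma (z / 2) = deriv Complex.Gamma (z / 2) / Complex.Gamma (z / 2) := rfl
    have hne := Complex.Gamma_ne_zero_of_re_pos hz2
    convert! a5 using 1
    rw [Complex.Gammaℝ_def, e, Complex.ofReal_log Real.pi_pos.le]
    simp only [Function.comp]
    field_simp
    ring
  have hz : ∀ z : ℂ, z.re = 1 / 2 → HasDerivAt riemannZeta (deriv riemannZeta z) z :=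
    fun z hz => (differentiableAt_riemannZeta (ne1 z hz)).hasDerivAt
  have hzc : riemannZeta ∘ (starRingEnd ℂ) = (starRingEnd ℂ) ∘ riemannZeta := by
    funext z; exact riemannZeta_conj z
  have h1' : deriv riemannZeta (1 - s) = 0 := by
    have a := (hz s hre).conj_conj
    rw [h1, ← hconj] at a
    have : (starRingEnd ℂ) ∘ riemannZeta ∘ (starRingEnd ℂ) = riemannZeta := by
      rw [hzc]; funext z; simp
    rw [this] at a
    simpa using a.deriv
  have p1 := (hGR s (by rw [hre]; norm_num)).mul (hz s hre)
  have p2 := (hGR (1 - s) (by rw [hre']; norm_num)).mul (hz (1 - s) hre')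
  have p3 := HasDerivAt.comp s p2 ((hasDerivAt_id s).const_sub 1)
  have heq : (Complex.Gammaℝ * riemannZeta) =ᶠ[𝓝 s]
      (Complex.Gammaℝ * riemannZeta) ∘ (fun x => 1 - id x) := by
    have hopen : {z : ℂ | 0 < z.re ∧ z.re < 1} ∈ 𝓝 s := by
      apply IsOpen.mem_nhds
      · exact (isOpen_lt continuous_const Complex.continuous_re).inter
          (isOpen_lt Complex.continuous_re continuous_const)
      · simp [hre]; norm_num
    filter_upwards [hopen] with z hz
    have key : ∀ w : ℂ, 0 < w.re → Complex.Gammaℝ w * riemannZeta w = completedRiemannZeta w := by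
      intro w hw
      have : w ≠ 0 := by rintro rfl; simp at hw
      rw [riemannZeta_def_of_ne_zero this]
      field_simp [Complex.Gammaℝ_ne_zero_of_re_pos hw]
    simp only [Pi.mul_apply, Function.comp, id]
    rw [key z hz.1, key (1 - z) (by simp; exact hz.2), completedRiemannZeta_one_sub]
  have p4 := p1.unique (p3.congr_of_eventuallyEq heq)
  have hval := heq.self_of_nhds
  simp only [Pi.mul_apply, Function.comp, id] at hval p4
  rw [h1, h1'] at p4
  have hGs : Complex.Gammaℝ s ≠ 0 := Complex.Gammaℝ_ne_zero_of_re_pos (by rw [hre]; norm_num)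
  have hd : Complex.digamma ((1 - s) / 2) = (starRingEnd ℂ) (Complex.digamma (s / 2)) := by
    have e1 : (1 - s) / 2 = (starRingEnd ℂ) (s / 2) := by rw [hconj, map_div₀, map_ofNat]
    have hs2 : 0 < (s / 2).re := by simp [hre]
    have a := (hG _ hs2).hasDerivAt.conj_conj
    have : (starRingEnd ℂ) ∘ Complex.Gamma ∘ (starRingEnd ℂ) = Complex.Gamma := by
      funext z; simp [Complex.Gamma_conj]
    rw [this] at a
    rw [e1, Complex.digamma_def, logDeriv_apply, logDeriv_apply, a.deriv, Complex.Gamma_conj]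
    simp
  have p5 : (Complex.digamma (s / 2) - Real.log π) / 2
      + ((starRingEnd ℂ) (Complex.digamma (s / 2)) - Real.log π) / 2 = 0 := by
    rw [← hd]
    have hprod : Complex.Gammaℝ s * riemannZeta s ≠ 0 := mul_ne_zero hGs h0
    apply mul_left_cancel₀ hprod
    linear_combination p4 - ((Complex.digamma ((1 - s) / 2) - Real.log π) / 2) * (-hval)
  have p6 := congrArg Complex.re p5
  have e : s / 2 = ((1 / 4 : ℝ) : ℂ) + ((t / 2 : ℝ) : ℂ) * Complex.I := by
    rw [hs]; push_cast; ring
  rw [e] at p6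
  have p7 := digamma_window (t / 2) (by
    simp [-Complex.ofReal_div] at p6 ⊢
    linarith)
  constructor <;> nlinarith [p7.1, p7.2]

open Filter Topology MeasureTheory Set

/-- Periodised quartic kernel. -/
noncomputable def emK (x : ℝ) : ℝ := (Int.fract x) ^ 2 * (1 - Int.fract x) ^ 2

lemma emK_nonneg (x : ℝ) : 0 ≤ emK x := by unfold emK; positivity

lemma emK_le (x : ℝ) : emK x ≤ 1 / 16 := by
  unfold emK
  have h1 := Int.fract_nonneg x
  have h2 := (Int.fract_lt_one x).le
  have h3 : 0 ≤ Int.fract x * (1 - Int.fract x) := mul_nonneg h1 (by linarith)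
  have h4 : Int.fract x * (1 - Int.fract x) ≤ 1 / 4 := by nlinarith [sq_nonneg (Int.fract x - 1 / 2)]
  rw [← mul_pow]; nlinarith

noncomputable def emF : ℝ → ℂ := (Ioi (3:ℝ)).indicator (fun x => (emK x : ℂ))

lemma emF_norm_le (x : ℝ) : ‖emF x‖ ≤ 1 / 16 := by
  unfold emF
  by_cases hx : x ∈ Ioi (3:ℝ)
  · rw [indicator_of_mem hx, Complex.norm_real, Real.norm_of_nonneg (emK_nonneg x)]
    exact emK_le x
  · rw [indicator_of_notMem hx]; norm_num

lemma emF_measurable : Measurable emF := by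
  unfold emF
  apply Measurable.indicator _ measurableSet_Ioi
  apply Complex.measurable_ofReal.comp
  unfold emK
  exact (measurable_fract.pow_const 2).mul ((measurable_const.sub measurable_fract).pow_const 2)

lemma emF_mellin (z : ℂ) (hz : z.re < 0) :
    MellinConvergent emF z ∧ 
    HasDerivAt (mellin emF) (mellin (fun t => Real.log t • emF t) z) z := by
  have hloc : LocallyIntegrableOn emF (Ioi 0) := by
    apply LocallyIntegrable.locallyIntegrableOn
    refine (locallyIntegrable_const (1 / 16 : ℝ)).mono emF_measurable.aestronglyMeasurable ?_
    filter_upwards with x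
    simpa using emF_norm_le x
  have htop : emF =O[atTop] (fun x : ℝ => x ^ (-(0:ℝ))) := by
    simp only [neg_zero, Real.rpow_zero]
    exact Asymptotics.IsBigO.of_bound (1 / 16) (by filter_upwards with x; simpa using emF_norm_le x)
  have hbot : emF =O[𝓝[>] 0] (fun x : ℝ => x ^ (-(z.re - 1))) := by
    refine Asymptotics.IsBigO.of_bound 1 ?_
    filter_upwards [Ioo_mem_nhdsGT (show (0:ℝ) < 3 by norm_num)] with x hx
    have : emF x = 0 := by
      unfold emF
      exact indicator_of_notMem (by simpa using hx.2.le) _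
    rw [this]; simp
  exact ⟨mellinConvergent_of_isBigO_rpow hloc htop hz hbot (by linarith),
    (mellin_hasDerivAt_of_isBigO_rpow hloc htop hz hbot (by linarith)).2⟩

/-- Antiderivative used for the Euler-Maclaurin formula on `[n, n+1]`. -/
noncomputable def emD (s : ℂ) (n : ℕ) (z : ℂ) : ℂ :=
  ((z - n) ^ 2 * (1 - (z - n)) ^ 2 / 24) * (-(s * (s + 1) * (s + 2)) * z ^ (-s - 3))
  - ((2 * (z - n) - 6 * (z - n) ^ 2 + 4 * (z - n) ^ 3) / 24) * (s * (s + 1) * z ^ (-s - 2))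
  + ((2 - 12 * (z - n) + 12 * (z - n) ^ 2) / 24) * (-s * z ^ (-s - 1))
  - ((-12 + 24 * (z - n)) / 24) * z ^ (-s)
  + z ^ (1 - s) / (1 - s)

lemma emD_hasDerivAt (s : ℂ) (hs : s ≠ 1) (n : ℕ) (z : ℂ) (hz : z ∈ slitPlane) :
    HasDerivAt (emD s n) (s * (s + 1) * (s + 2) * (s + 3) / 24
      * ((z - n) ^ 2 * (1 - (z - n)) ^ 2) * z ^ (-s - 3 - 1)) z := by
  have hz0 : z ≠ 0 := slitPlane_ne_zero hz
  have hpow : ∀ c : ℂ, HasDerivAt (fun w : ℂ => w ^ c) (c * z ^ (c - 1)) z := by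
    intro c
    simpa using (hasDerivAt_id z).cpow_const (c := c) hz
  have hu : HasDerivAt (fun w : ℂ => w - n) 1 z := (hasDerivAt_id z).sub_const _
  have k0 := (((hu.pow 2).mul ((hu.const_sub 1).pow 2)).div_const 24).mul
    ((hpow (-s - 3)).const_mul (-(s * (s + 1) * (s + 2))))
  have k1 := ((((hu.const_mul 2).sub ((hu.pow 2).const_mul 6)).add
    ((hu.pow 3).const_mul 4)).div_const 24).mul ((hpow (-s - 2)).const_mul (s * (s + 1)))
  have k2 := ((((hu.const_mul 12).const_sub 2).add
    ((hu.pow 2).const_mul 12)).div_const 24).mul ((hpow (-s - 1)).const_mul (-s))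
  have k3 := (((hu.const_mul 24).const_add (-12)).div_const 24).mul (hpow (-s))
  have k4 := (hpow (1 - s)).div_const (1 - s)
  have k := (((k0.sub k1).add k2).sub k3).add k4
  have hs' : (1 - s) ≠ 0 := sub_ne_zero.2 (Ne.symm hs)
  have cso : ∀ c : ℂ, z ^ (c - 1) = z ^ c / z := fun c => by
    rw [cpow_sub _ _ hz0, cpow_one]
  have e0 : z ^ (-s - 3) = z * z ^ (-s - 3 - 1) := by
    rw [cso]; field_simp
  have e1 : z ^ (-s - 2) = z ^ 2 * z ^ (-s - 3 - 1) := by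
    rw [show -s - 3 = -s - 2 - 1 by ring, cso, cso]; field_simp
  have e2 : z ^ (-s - 1) = z ^ 3 * z ^ (-s - 3 - 1) := by
    rw [show -s - 3 = -s - 1 - 1 - 1 by ring]; simp only [cso]; field_simp
  have e3 : z ^ (-s) = z ^ 4 * z ^ (-s - 3 - 1) := by
    rw [show -s - 3 = -s - 1 - 1 - 1 by ring]; simp only [cso]; field_simp
  have f1 : z ^ (-s - 2 - 1) = z * z ^ (-s - 3 - 1) := by
    rw [← e0]; congr 1; ring
  have f2 : z ^ (-s - 1 - 1) = z ^ 2 * z ^ (-s - 3 - 1) := by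
    rw [← e1]; congr 1; ring
  have f4 : z ^ (1 - s - 1) = z ^ 4 * z ^ (-s - 3 - 1) := by
    rw [← e3]; congr 1; ring
  convert! k using 1
  simp only [Pi.mul_apply, Pi.pow_apply, Pi.sub_apply, Pi.add_apply]
  rw [f1, f2, f4, e0, e1, e2, e3]
  field_simp
  push_cast
  ring

lemma emD_integral (s : ℂ) (hs : s ≠ 1) (n : ℕ) (hn : 3 ≤ n) :
    s * (s + 1) * (s + 2) * (s + 3) / 24 *
      (∫ x in (n:ℝ)..((n + 1 : ℕ) : ℝ), (x : ℂ) ^ (-s - 3 - 1) • emF x) =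
    emD s n ((n + 1 : ℕ) : ℂ) - emD s n (n : ℂ) := by
  have hn' : (3:ℝ) ≤ n := by exact_mod_cast hn
  have hslit : ∀ x : ℝ, 0 < x → (x : ℂ) ∈ slitPlane := fun x hx => by
    simpa using hx
  have hcongr : (∫ x in (n:ℝ)..((n + 1 : ℕ) : ℝ), (x : ℂ) ^ (-s - 3 - 1) • emF x)
    = ∫ x in (n:ℝ)..((n + 1 : ℕ) : ℝ),
      (((x:ℂ) - n) ^ 2 * (1 - ((x:ℂ) - n)) ^ 2) * (x : ℂ) ^ (-s - 3 - 1) := by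
    apply intervalIntegral.integral_congr_ae
    have : ∀ᵐ x : ℝ, x ≠ ((n + 1 : ℕ) : ℝ) := by
      simp [ae_iff, measure_singleton]
    filter_upwards [this] with x hx1 hx
    rw [uIoc_of_le (by push_cast; linarith)] at hx
    have hx2 : x < n + 1 := by
      have := lt_of_le_of_ne hx.2 hx1
      push_cast at this; exact this
    have hfl : ⌊x⌋ = (n : ℤ) := by
      rw [Int.floor_eq_iff]; push_cast; exact ⟨hx.1.le, hx2⟩
    have hfr : Int.fract x = x - n := by
      rw [Int.fract, hfl]; push_cast; rfl
    have h3 : x ∈ Ioi (3:ℝ) := lt_of_le_of_lt hn' hx.1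
    simp only [emF, indicator_of_mem h3, emK, hfr, smul_eq_mul]
    push_cast; ring
  rw [hcongr, ← intervalIntegral.integral_const_mul]
  have hpos : ∀ x ∈ uIcc (n:ℝ) ((n + 1 : ℕ) : ℝ), 0 < x := by
    intro x hx
    rw [uIcc_of_le (by push_cast; linarith)] at hx
    linarith [hx.1]
  have := intervalIntegral.integral_eq_sub_of_hasDerivAt (a := (n:ℝ)) (b := ((n + 1 : ℕ) : ℝ))
    (f := fun x : ℝ => emD s n x) (f' := fun x : ℝ => s * (s + 1) * (s + 2) * (s + 3) / 24
      * (((x:ℂ) - n) ^ 2 * (1 - ((x:ℂ) - n)) ^ 2) * (x:ℂ) ^ (-s - 3 - 1)) 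
    (fun x hx => (emD_hasDerivAt s hs n x (hslit x (hpos x hx))).comp_ofReal)
    (by
      apply ContinuousOn.intervalIntegrable
      intro x hx
      have h1 : ContinuousAt (fun x : ℝ => (x:ℂ) ^ (-s - 3 - 1)) x :=
        ContinuousAt.cpow (Complex.continuous_ofReal.continuousAt) continuousAt_const
          (hslit x (hpos x hx))
      apply ContinuousAt.continuousWithinAt
      apply ContinuousAt.mul _ h1
      fun_prop)
  rw [← Complex.ofReal_natCast, ← Complex.ofReal_natCast, ← this]
  congr 1
  funext x
  push_cast; ring

lemma emD_diff (s : ℂ) (n : ℕ) :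
    emD s n ((n + 1 : ℕ) : ℂ) - emD s n (n : ℂ) =
      -s * (((n + 1 : ℕ) : ℂ) ^ (-s - 1) - (n : ℂ) ^ (-s - 1)) / 12
      - (((n + 1 : ℕ) : ℂ) ^ (-s) + (n : ℂ) ^ (-s)) / 2
      + (((n + 1 : ℕ) : ℂ) ^ (1 - s) - (n : ℂ) ^ (1 - s)) / (1 - s) := by
  have e : ((n + 1 : ℕ) : ℂ) - n = 1 := by push_cast; ring
  unfold emD
  rw [e, sub_self]
  ring

lemma em_finite (s : ℂ) (hs : s ≠ 1) (hre : -3 < s.re) (m : ℕ) :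
    s * (s + 1) * (s + 2) * (s + 3) / 24 *
      (∫ x in (3:ℝ)..((m + 3 : ℕ) : ℝ), (x : ℂ) ^ (-s - 3 - 1) • emF x) =
    -s * (((m + 3 : ℕ) : ℂ) ^ (-s - 1) - (3 : ℂ) ^ (-s - 1)) / 12
      - ∑ k ∈ Finset.range m, ((k + 3 : ℕ) : ℂ) ^ (-s)
      - (((m + 3 : ℕ) : ℂ) ^ (-s) - 3 ^ (-s)) / 2
      + (((m + 3 : ℕ) : ℂ) ^ (1 - s) - (3 : ℂ) ^ (1 - s)) / (1 - s) := by
  induction m with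
  | zero => simp
  | succ m ih =>
    have hint : IntegrableOn (fun x : ℝ => (x : ℂ) ^ (-s - 3 - 1) • emF x) (Ioi 0) :=
      (emF_mellin (-s - 3) (by simp; linarith)).1
    have hii : ∀ a b : ℝ, 0 ≤ a → 0 ≤ b → 
        IntervalIntegrable (fun x : ℝ => (x : ℂ) ^ (-s - 3 - 1) • emF x) volume a b := by
      intro a b ha hb
      rw [intervalIntegrable_iff]
      refine hint.mono_set (fun x hx => ?_)
      have := hx.1
      exact lt_of_le_of_lt (le_min ha hb) this
    rw [← intervalIntegral.integral_add_adjacent_intervals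
      (hii 3 ((m + 3 : ℕ) : ℝ) (by norm_num) (by positivity))
      (hii ((m + 3 : ℕ) : ℝ) ((m + 1 + 3 : ℕ) : ℝ) (by positivity) (by positivity)), mul_add, ih]
    have h := emD_integral s hs (m + 3) (by omega)
    rw [emD_diff] at h
    rw [show m + 1 + 3 = m + 3 + 1 by ring, h, Finset.sum_range_succ]
    ring

lemma tendsto_natpow (c : ℂ) (hc : c.re < 0) :
    Tendsto (fun m : ℕ => ((m + 3 : ℕ) : ℂ) ^ c) atTop (𝓝 0) := by
  rw [tendsto_zero_iff_norm_tendsto_zero]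
  have h1 : Tendsto (fun x : ℝ => x ^ (-(-c.re))) atTop (𝓝 0) :=
    tendsto_rpow_neg_atTop (by linarith)
  have h2 : Tendsto (fun m : ℕ => ((m + 3 : ℕ) : ℝ)) atTop atTop :=
    tendsto_natCast_atTop_atTop.comp (tendsto_add_atTop_nat 3)
  refine (h1.comp h2).congr (fun m => ?_)
  have := Complex.norm_cpow_eq_rpow_re_of_pos (show (0:ℝ) < ((m + 3 : ℕ) : ℝ) by positivity) c
  rw [Complex.ofReal_natCast] at this
  rw [this]; simp

/-- Euler-Maclaurin expression for zeta -/
noncomputable def emZ (s : ℂ) : ℂ :=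
  1 + 2 ^ (-s) + 3 ^ (-s) / 2 + s * 3 ^ (-s - 1) / 12 + 3 ^ (1 - s) / (s - 1)
   - s * (s + 1) * (s + 2) * (s + 3) / 24 * mellin emF (-s - 3)

lemma emZ_eq_of_one_lt (s : ℂ) (hs : 1 < s.re) : riemannZeta s = emZ s := by
  have hs1 : s ≠ 1 := by rintro rfl; simp at hs
  have hint : IntegrableOn (fun x : ℝ => (x : ℂ) ^ (-s - 3 - 1) • emF x) (Ioi 0) :=
    (emF_mellin (-s - 3) (by simp; linarith)).1
  have hmel : mellin emF (-s - 3) = ∫ x in Ioi (3:ℝ), (x : ℂ) ^ (-s - 3 - 1) • emF x := by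
    unfold mellin
    apply setIntegral_eq_of_subset_of_forall_sdiff_eq_zero measurableSet_Ioi
      (Ioi_subset_Ioi (by norm_num))
    intro x hx
    have : emF x = 0 := by unfold emF; exact indicator_of_notMem hx.2 _
    rw [this, smul_zero]
  have hl : Tendsto (fun m : ℕ => s * (s + 1) * (s + 2) * (s + 3) / 24 *
      (∫ x in (3:ℝ)..((m + 3 : ℕ) : ℝ), (x : ℂ) ^ (-s - 3 - 1) • emF x)) atTop
      (𝓝 (s * (s + 1) * (s + 2) * (s + 3) / 24 * mellin emF (-s - 3))) := by
    rw [hmel]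
    apply Tendsto.const_mul
    exact intervalIntegral_tendsto_integral_Ioi 3
      (hint.mono_set (Ioi_subset_Ioi (by norm_num)))
      (tendsto_natCast_atTop_atTop.comp (tendsto_add_atTop_nat 3))
  have hsum : HasSum (fun n : ℕ => ((n + 1 : ℕ) : ℂ) ^ (-s)) (riemannZeta s) := by
    rw [zeta_eq_tsum_one_div_nat_add_one_cpow hs]
    have hsm : Summable (fun n : ℕ => 1 / ((n:ℂ) + 1) ^ s) := by
      have := (summable_nat_add_iff 1).2 (Complex.summable_one_div_nat_cpow.2 hs)
      simpa using this
    convert! hsm.hasSum using 1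
    funext n
    rw [cpow_neg, one_div]; push_cast; rfl
  have hsum3 := (hasSum_nat_add_iff' 2).2 hsum
  have ht := hsum3.tendsto_sum_nat
  have hr : Tendsto (fun m : ℕ => -s * (((m + 3 : ℕ) : ℂ) ^ (-s - 1) - (3 : ℂ) ^ (-s - 1)) / 12
      - ∑ k ∈ Finset.range m, ((k + 3 : ℕ) : ℂ) ^ (-s)
      - (((m + 3 : ℕ) : ℂ) ^ (-s) - 3 ^ (-s)) / 2
      + (((m + 3 : ℕ) : ℂ) ^ (1 - s) - (3 : ℂ) ^ (1 - s)) / (1 - s)) atTop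
      (𝓝 (-s * (0 - (3 : ℂ) ^ (-s - 1)) / 12
      - (riemannZeta s - ∑ i ∈ Finset.range 2, ((i + 1 : ℕ) : ℂ) ^ (-s))
      - (0 - 3 ^ (-s)) / 2
      + (0 - (3 : ℂ) ^ (1 - s)) / (1 - s))) := by
    refine Tendsto.add (Tendsto.sub (Tendsto.sub ?_ ht) ?_) ?_
    · exact (((tendsto_natpow _ (by simp; linarith)).sub_const _).const_mul _).div_const _
    · exact ((tendsto_natpow _ (by simp; linarith)).sub_const _).div_const _
    · exact ((tendsto_natpow _ (by simp; linarith)).sub_const _).div_const _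
  have h := tendsto_nhds_unique hl (hr.congr (fun m => (em_finite s hs1 (by linarith) m).symm))
  unfold emZ
  rw [h]
  simp [Finset.sum_range_succ]
  have : (1 - s) ≠ 0 := sub_ne_zero.2 (Ne.symm hs1)
  have h' : (s - 1) ≠ 0 := sub_ne_zero.2 hs1
  have e : (3:ℂ) ^ (1 - s) / (s - 1) = - ((3:ℂ) ^ (1 - s) / (1 - s)) := by
    field_simp; ring
  rw [e]
  norm_num
  ring

lemma emZ_hasDerivAt (s : ℂ) (hs : s ≠ 1) (hre : -3 < s.re) :
    HasDerivAt emZ (-(Complex.log 2 * 2 ^ (-s)) - Complex.log 3 * 3 ^ (-s) / 2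
      + 3 ^ (-s - 1) / 12 - s * (Complex.log 3 * 3 ^ (-s - 1)) / 12
      - Complex.log 3 * 3 ^ (1 - s) / (s - 1) - 3 ^ (1 - s) / (s - 1) ^ 2
      - ((s + 1) * (s + 2) * (s + 3) + s * (s + 2) * (s + 3) + s * (s + 1) * (s + 3)
        + s * (s + 1) * (s + 2)) / 24 * mellin emF (-s - 3)
      + s * (s + 1) * (s + 2) * (s + 3) / 24 *
        mellin (fun t => Real.log t • emF t) (-s - 3)) s := by
  have hid := hasDerivAt_id s
  have hn : HasDerivAt (fun w : ℂ => -w) (-1) s := hid.neg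
  have a2 := hn.const_cpow (c := (2:ℂ)) (Or.inl (by norm_num))
  have a3 := hn.const_cpow (c := (3:ℂ)) (Or.inl (by norm_num))
  have a4 := (hn.sub_const 1).const_cpow (c := (3:ℂ)) (Or.inl (by norm_num))
  have a5 := (hid.const_sub 1).const_cpow (c := (3:ℂ)) (Or.inl (by norm_num))
  have hs' : s - 1 ≠ 0 := sub_ne_zero.2 hs
  have a6 := a5.div (hid.sub_const 1) hs'
  have a7 := HasDerivAt.comp s (emF_mellin (-s - 3) (by simp; linarith)).2 (hn.sub_const 3)
  have a8 := ((((hid.mul (hid.add_const 1)).mul (hid.add_const 2)).mul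
    (hid.add_const 3)).div_const 24).mul a7
  have k := (((((a2.const_add 1).add (a3.div_const 2)).add
    ((hid.mul a4).div_const 12)).add a6).sub a8)
  convert! k using 1
  simp only [Pi.mul_apply, Function.comp, id]
  field_simp
  ring

lemma zeta_eq_emZ (t : ℝ) (s : ℂ) (hs : -3 < s.re ∧ 0 < t * s.im) :
    riemannZeta =ᶠ[𝓝 s] emZ := by
  set U : Set ℂ := {z | -3 < z.re ∧ 0 < t * z.im} with hU
  have ht : t ≠ 0 := by rintro rfl; simp at hs
  have hopen : IsOpen U := (isOpen_lt continuous_const Complex.continuous_re).inter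
    (isOpen_lt continuous_const (continuous_const.mul Complex.continuous_im))
  have hconv : Convex ℝ U := by
    apply Convex.inter
    · exact convex_halfSpace_re_gt _
    · exact (convex_Ioi (0:ℝ)).linear_preimage (t • Complex.imLm)
  have hne : ∀ z ∈ U, z ≠ 1 := by
    rintro z hz rfl
    simpa using hz.2
  have h1 : AnalyticOnNhd ℂ riemannZeta U := DifferentiableOn.analyticOnNhd
    (fun z hz => (differentiableAt_riemannZeta (hne z hz)).differentiableWithinAt) hopen
  have h2 : AnalyticOnNhd ℂ emZ U := DifferentiableOn.analyticOnNhd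
    (fun z hz => (emZ_hasDerivAt z (hne z hz) hz.1).differentiableAt.differentiableWithinAt) hopen
  have hz0 : (2 + t * Complex.I : ℂ) ∈ U := by
    refine ⟨by simp; norm_num, ?_⟩
    simp; positivity
  have hev : riemannZeta =ᶠ[𝓝 (2 + t * Complex.I : ℂ)] emZ := by
    have : {z : ℂ | 1 < z.re} ∈ 𝓝 (2 + t * Complex.I : ℂ) :=
      (isOpen_lt continuous_const Complex.continuous_re).mem_nhds (by simp)
    filter_upwards [this] with z hz using emZ_eq_of_one_lt z hz
  have := h1.eqOn_of_preconnected_of_eventuallyEq h2 hconv.isPreconnected hz0 hev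
  filter_upwards [hopen.mem_nhds hs] with z hz using this hz

lemma log_three_bounds : 1.0985 < Real.log 3 ∧ Real.log 3 < 1.0988 := by
  have h := aux_artanh (1 / 17) (by norm_num) (by norm_num)
  have e : Real.log (1 + 1 / 17) - Real.log (1 - 1 / 17) = 2 * Real.log 3 - 3 * Real.log 2 := by
    rw [← Real.log_div (by norm_num) (by norm_num),
      show (1 + 1 / 17 : ℝ) / (1 - 1 / 17) = 3 ^ 2 / 2 ^ 3 by norm_num,
      Real.log_div (by norm_num) (by norm_num), Real.log_pow, Real.log_pow]
    norm_num
  rw [e] at h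
  have h1 := Real.log_two_gt_d9
  have h2 := Real.log_two_lt_d9
  constructor
  · norm_num at h h1 h2 ⊢; linarith [h.1]
  · norm_num at h h1 h2 ⊢; linarith [h.2]

lemma rpow_three_aux : (3:ℝ) ^ (-(7/2) : ℝ) = 3 ^ (-(1/2) : ℝ) / 27 ∧
    (3:ℝ) ^ (-(5/2) : ℝ) = 3 ^ (-(1/2) : ℝ) / 9 := by
  constructor
  · rw [show (-(7/2) : ℝ) = -(1/2) - (3:ℕ) by norm_num, Real.rpow_sub (by norm_num),
      Real.rpow_natCast]; norm_num
  · rw [show (-(5/2) : ℝ) = -(1/2) - (2:ℕ) by norm_num, Real.rpow_sub (by norm_num),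
      Real.rpow_natCast]; norm_num

lemma norm_setIntegral_bound (f : ℝ → ℂ) (g : ℝ → ℝ) (hg : IntegrableOn g (Ioi 3))
    (h0 : ∀ x, x ≤ 3 → f x = 0) (h : ∀ x, 3 < x → ‖f x‖ ≤ g x) :
    ‖∫ x in Ioi (0:ℝ), f x‖ ≤ ∫ x in Ioi (3:ℝ), g x := by
  have e : ∫ x in Ioi (0:ℝ), f x = ∫ x in Ioi (3:ℝ), f x := by
    apply setIntegral_eq_of_subset_of_forall_sdiff_eq_zero measurableSet_Ioi
      (Ioi_subset_Ioi (by norm_num))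
    intro x hx
    exact h0 x (not_lt.1 hx.2)
  rw [e]
  apply norm_integral_le_of_norm_le hg
  filter_upwards [ae_restrict_mem measurableSet_Ioi] with x hx using h x hx

lemma emF_zero (x : ℝ) (hx : x ≤ 3) : emF x = 0 := by
  unfold emF; exact indicator_of_notMem (by simpa using hx) _

lemma mellin_bounds (s : ℂ) (hs : s.re = 1 / 2) :
    ‖mellin emF (-s - 3)‖ ≤ 3 ^ (-(1/2) : ℝ) * (1 / 16 * (2 / 189)) ∧
    ‖mellin (fun t => Real.log t • emF t) (-s - 3)‖ ≤
      3 ^ (-(1/2) : ℝ) * (1 / 16 * ((Real.log 3 - 1) * (2 / 189) + 2 / 135)) := by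
  have i1 : IntegrableOn (fun x : ℝ => x ^ (-(9/2) : ℝ)) (Ioi 3) :=
    integrableOn_Ioi_rpow_of_lt (by norm_num) (by norm_num)
  have i2 : IntegrableOn (fun x : ℝ => x ^ (-(7/2) : ℝ)) (Ioi 3) :=
    integrableOn_Ioi_rpow_of_lt (by norm_num) (by norm_num)
  have v1 : ∫ x in Ioi (3:ℝ), x ^ (-(9/2) : ℝ) = 3 ^ (-(1/2) : ℝ) * (2 / 189) := by
    rw [integral_Ioi_rpow_of_lt (by norm_num) (by norm_num),
      show (-(9/2) + 1 : ℝ) = -(7/2) by norm_num, rpow_three_aux.1]; ring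
  have v2 : ∫ x in Ioi (3:ℝ), x ^ (-(7/2) : ℝ) = 3 ^ (-(1/2) : ℝ) * (2 / 45) := by
    rw [integral_Ioi_rpow_of_lt (by norm_num) (by norm_num),
      show (-(7/2) + 1 : ℝ) = -(5/2) by norm_num, rpow_three_aux.2]; ring
  have hnorm : ∀ x : ℝ, 3 < x → ‖(x:ℂ) ^ (-s - 3 - 1)‖ = x ^ (-(9/2) : ℝ) := by
    intro x hx
    rw [Complex.norm_cpow_eq_rpow_re_of_pos (by linarith)]
    congr 1
    simp [hs]; norm_num
  constructor
  · unfold mellin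
    refine (norm_setIntegral_bound _ (fun x => x ^ (-(9/2) : ℝ) * (1 / 16)) (i1.mul_const _)
      (fun x hx => ?_) (fun x hx => ?_)).trans ?_
    · rw [emF_zero x hx, smul_zero]
    · rw [norm_smul, hnorm x hx]
      exact mul_le_mul_of_nonneg_left (emF_norm_le x) (Real.rpow_nonneg (by linarith) _)
    · rw [integral_mul_const, v1]; apply le_of_eq; ring
  · unfold mellin
    refine (norm_setIntegral_bound _ (fun x => x ^ (-(9/2) : ℝ) * (1 / 16 * (Real.log 3 - 1))
        + x ^ (-(7/2) : ℝ) * (1 / 48)) ((i1.mul_const _).add (i2.mul_const _))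
      (fun x hx => ?_) (fun x hx => ?_)).trans ?_
    · simp only [emF_zero x hx, smul_zero]
    · have hx0 : 0 < x := by linarith
      rw [norm_smul, norm_smul, hnorm x hx, Real.norm_of_nonneg (Real.log_nonneg (by linarith))]
      have hl : Real.log x ≤ Real.log 3 - 1 + x / 3 := by
        have := Real.log_le_sub_one_of_pos (show 0 < x / 3 by positivity)
        rw [Real.log_div hx0.ne' (by norm_num)] at this
        linarith
      have hl0 : 0 ≤ Real.log x := Real.log_nonneg (by linarith)
      have e : x ^ (-(7/2) : ℝ) = x ^ (-(9/2) : ℝ) * x := by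
        rw [← Real.rpow_add_one hx0.ne']; norm_num
      rw [e]
      have hp : 0 ≤ x ^ (-(9/2) : ℝ) := Real.rpow_nonneg hx0.le _
      have h16 := emF_norm_le x
      have : Real.log x * ‖emF x‖ ≤ (Real.log 3 - 1 + x / 3) * (1 / 16) :=
        mul_le_mul hl h16 (norm_nonneg _) (by linarith)
      calc _ ≤ x ^ (-(9/2) : ℝ) * ((Real.log 3 - 1 + x / 3) * (1 / 16)) :=
            mul_le_mul_of_nonneg_left this hp
        _ = _ := by ring
    · rw [integral_add (i1.mul_const _) (i2.mul_const _), integral_mul_const, integral_mul_const,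
        v1, v2]; apply le_of_eq; ring

lemma norm_le_of_sq (z : ℂ) (a : ℝ) (ha : 0 ≤ a) (h : z.re ^ 2 + z.im ^ 2 ≤ a ^ 2) : ‖z‖ ≤ a := by
  rw [Complex.norm_def]
  apply Real.sqrt_le_iff.2 ⟨ha, ?_⟩
  rw [Complex.normSq_apply]; nlinarith

lemma Q_bound (t : ℝ) (h1 : 36 ≤ t ^ 2) (h2 : t ^ 2 ≤ 40.5) (s : ℂ) (hs : s = 1 / 2 + Complex.I * t) :
    ‖-(Real.log 3 : ℂ) / 2 + 1 / 36 - s * Real.log 3 / 36 - 3 * Real.log 3 / (s - 1)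
      - 3 / (s - 1) ^ 2‖ ≤ 0.61 := by
  obtain ⟨l1, l2⟩ := log_three_bounds
  set L := Real.log 3
  obtain ⟨r, hr⟩ : ∃ r : ℝ, r = 1 / (t ^ 2 + 1 / 4) := ⟨_, rfl⟩
  have hrT : r * (t ^ 2 + 1 / 4) = 1 := by rw [hr]; field_simp
  have hr1 : r ≤ 0.0276 := by
    rw [hr, div_le_iff₀ (by positivity)]; norm_num at *; linarith
  have hr2 : 0.0245 ≤ r := by
    rw [hr, le_div_iff₀ (by positivity)]; norm_num at *; linarith
  have hs1 : s - 1 ≠ 0 := by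
    intro h
    have := congrArg Complex.re h
    simp [hs] at this
    norm_num at this
  have hrT' : (r:ℂ) * ((t:ℂ) ^ 2 + 1 / 4) = 1 := by
    have := congrArg (fun x : ℝ => (x : ℂ)) hrT
    push_cast at this
    exact this
  have hinv : (s - 1)⁻¹ = (-(1/2) - Complex.I * t) * r := by
    symm
    apply eq_inv_of_mul_eq_one_left
    rw [hs]
    linear_combination hrT' - r * t ^ 2 * Complex.I_sq
  have e : -(L : ℂ) / 2 + 1 / 36 - s * L / 36 - 3 * L / (s - 1) - 3 / (s - 1) ^ 2
    = ((-L / 2 + 1 / 36 - L / 72 + 3 * L * r / 2 + 3 * r - 3 / 2 * r ^ 2 : ℝ) : ℂ)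
      + ((t * (3 * L * r - 3 * r ^ 2 - L / 36) : ℝ) : ℂ) * Complex.I := by
    rw [div_eq_mul_inv _ (s - 1), div_eq_mul_inv _ ((s - 1) ^ 2), ← inv_pow, hinv, hs]
    push_cast
    linear_combination (3 * r) * hrT' - 3 * (t:ℂ) ^ 2 * r ^ 2 * Complex.I_sq
  rw [e]
  apply norm_le_of_sq _ _ (by norm_num)
  simp only [Complex.add_re, Complex.ofReal_re, Complex.mul_re, Complex.I_re, Complex.I_im,
    Complex.ofReal_im, Complex.add_im, Complex.mul_im]
  have a1 : -0.45 ≤ -L / 2 + 1 / 36 - L / 72 + 3 * L * r / 2 + 3 * r - 3 / 2 * r ^ 2 := by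
    norm_num at *
    nlinarith
  have a2 : -L / 2 + 1 / 36 - L / 72 + 3 * L * r / 2 + 3 * r - 3 / 2 * r ^ 2 ≤ 0.45 := by
    norm_num at *
    nlinarith
  have b1 : 0 ≤ 3 * L * r - 3 * r ^ 2 - L / 36 := by
    norm_num at *
    nlinarith
  have b2 : 3 * L * r - 3 * r ^ 2 - L / 36 ≤ 0.062 := by
    norm_num at *
    nlinarith
  have c1 : (-L / 2 + 1 / 36 - L / 72 + 3 * L * r / 2 + 3 * r - 3 / 2 * r ^ 2) ^ 2 ≤ 0.45 ^ 2 :=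
    sq_le_sq' (by linarith) a2
  have c2 : (3 * L * r - 3 * r ^ 2 - L / 36) ^ 2 ≤ 0.062 ^ 2 :=
    sq_le_sq' (by linarith) b2
  have c3 : (t * (3 * L * r - 3 * r ^ 2 - L / 36)) ^ 2 ≤ 40.5 * 0.062 ^ 2 := by
    rw [mul_pow]
    exact mul_le_mul h2 c2 (sq_nonneg _) (by norm_num)
  ring_nf at c1 c3 ⊢
  norm_num at c1 c3 ⊢
  linarith

lemma zeta_deriv_ne_zero (t : ℝ) (h1 : 36 ≤ t ^ 2) (h2 : t ^ 2 ≤ 40.5) :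
    deriv riemannZeta (1 / 2 + Complex.I * t) ≠ 0 := by
  set s : ℂ := 1 / 2 + Complex.I * t with hs
  have hre : s.re = 1 / 2 := by simp [hs]
  have him : s.im = t := by simp [hs]
  have hs1 : s ≠ 1 := by
    intro h; rw [h] at hre; norm_num at hre
  have hev := zeta_eq_emZ t s ⟨by rw [hre]; norm_num, by rw [him]; nlinarith⟩
  rw [hev.deriv_eq, (emZ_hasDerivAt s hs1 (by rw [hre]; norm_num)).deriv]
  intro h0
  set Me := mellin emF (-s - 3)
  set Ml := mellin (fun t => Real.log t • emF t) (-s - 3)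
  obtain ⟨m1, m2⟩ := mellin_bounds s hre
  set q : ℝ := 3 ^ (-(1/2) : ℝ) with hq
  have hq0 : 0 < q := Real.rpow_pos_of_pos (by norm_num) _
  have hQ := Q_bound t h1 h2 s hs
  obtain ⟨l1, l2⟩ := log_three_bounds
  have e3 : (3:ℂ) ^ (-s - 1) = 3 ^ (-s) / 3 := by
    rw [cpow_sub _ _ (by norm_num), cpow_one]
  have e3' : (3:ℂ) ^ (1 - s) = 3 * 3 ^ (-s) := by
    rw [sub_eq_add_neg, cpow_add _ _ (by norm_num), cpow_one]
  have elog3 : Complex.log 3 = (Real.log 3 : ℂ) := by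
    have := Complex.ofReal_log (show (0:ℝ) ≤ 3 by norm_num)
    rw [this]; norm_num
  have elog2 : Complex.log 2 = (Real.log 2 : ℂ) := by
    have := Complex.ofReal_log (show (0:ℝ) ≤ 2 by norm_num)
    rw [this]; norm_num
  set Q : ℂ := -(Real.log 3 : ℂ) / 2 + 1 / 36 - s * Real.log 3 / 36 - 3 * Real.log 3 / (s - 1)
      - 3 / (s - 1) ^ 2 with hQdef
  set P : ℂ := s * (s + 1) * (s + 2) * (s + 3) with hP
  set P' : ℂ := ((s + 1) * (s + 2) * (s + 3) + s * (s + 2) * (s + 3) + s * (s + 1) * (s + 3)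
        + s * (s + 1) * (s + 2)) with hP'
  have key : (Real.log 2 : ℂ) * 2 ^ (-s) = 3 ^ (-s) * Q - P' / 24 * Me + P / 24 * Ml := by
    rw [e3, e3', elog3, elog2] at h0
    rw [hQdef]
    linear_combination -h0
  have n2 : ‖(2:ℂ) ^ (-s)‖ = 2 ^ (-(1/2) : ℝ) := by
    have := Complex.norm_cpow_eq_rpow_re_of_pos (show (0:ℝ) < 2 by norm_num) (-s)
    simpa [hre] using this
  have n3 : ‖(3:ℂ) ^ (-s)‖ = q := by
    have := Complex.norm_cpow_eq_rpow_re_of_pos (show (0:ℝ) < 3 by norm_num) (-s)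
    rw [hq]
    simpa [hre] using this
  have k0 : ‖s‖ ≤ 6.4 := norm_le_of_sq _ _ (by norm_num) (by
    rw [hre, him]; norm_num at *; linarith)
  have k1 : ‖s + 1‖ ≤ 6.54 := norm_le_of_sq _ _ (by norm_num) (by
    simp only [add_re, add_im, one_re, one_im, hre, him]; norm_num at *; linarith)
  have k2 : ‖s + 2‖ ≤ 6.84 := norm_le_of_sq _ _ (by norm_num) (by
    simp only [add_re, add_im, re_ofNat, im_ofNat, hre, him]; norm_num at *; linarith)
  have k3 : ‖s + 3‖ ≤ 7.27 := norm_le_of_sq _ _ (by norm_num) (by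
    simp only [add_re, add_im, re_ofNat, im_ofNat, hre, him]; norm_num at *; linarith)
  have hPn : ‖P‖ ≤ 2082 := by
    rw [hP, norm_mul, norm_mul, norm_mul]
    calc _ ≤ (6.4 : ℝ) * 6.54 * 6.84 * 7.27 := by gcongr
      _ ≤ _ := by norm_num
  have hPn' : ‖P'‖ ≤ 1235 := by
    rw [hP']
    refine (norm_add_le_of_le (norm_add_le_of_le (norm_add_le _ _) le_rfl) le_rfl).trans ?_
    simp only [norm_mul]
    calc _ ≤ (6.54 : ℝ) * 6.84 * 7.27 + 6.4 * 6.84 * 7.27 + 6.4 * 6.54 * 7.27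
          + 6.4 * 6.54 * 6.84 := by gcongr
      _ ≤ _ := by norm_num
  have hn := congrArg norm key
  rw [norm_mul, n2, Complex.norm_real, Real.norm_of_nonneg (Real.log_nonneg (by norm_num))] at hn
  have hb : ‖3 ^ (-s) * Q - P' / 24 * Me + P / 24 * Ml‖ ≤
      q * 0.61 + 1235 / 24 * (q * (1 / 16 * (2 / 189)))
       + 2082 / 24 * (q * (1 / 16 * ((Real.log 3 - 1) * (2 / 189) + 2 / 135))) := by
    refine (norm_add_le_of_le (norm_sub_le _ _) le_rfl).trans ?_
    simp only [norm_mul, norm_div, n3, RCLike.norm_ofNat]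
    gcongr
  have hb2 : Real.log 2 * 2 ^ (-(1/2) : ℝ) ≤ q * 0.74 := by
    rw [hn]
    refine hb.trans ?_
    norm_num at l1 l2 ⊢
    nlinarith
  have q2 : q ^ 2 = 1 / 3 := by
    rw [hq, ← Real.rpow_natCast, ← Real.rpow_mul (by norm_num)]
    norm_num
  have w2 : ((2:ℝ) ^ (-(1/2) : ℝ)) ^ 2 = 1 / 2 := by
    rw [← Real.rpow_natCast, ← Real.rpow_mul (by norm_num)]
    norm_num
  have hl2 := Real.log_two_gt_d9
  have hsq : (Real.log 2 * 2 ^ (-(1/2) : ℝ)) ^ 2 ≤ (q * 0.74) ^ 2 :=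
    pow_le_pow_left₀ (by positivity) hb2 2
  rw [mul_pow, mul_pow, q2, w2] at hsq
  norm_num at hl2 hsq
  nlinarith

lemma zeta_deriv_key (t : ℝ) (h : deriv riemannZeta (1 / 2 + Complex.I * t) = 0) :
    riemannZeta (1 / 2 + Complex.I * t) = 0 := by
  by_contra h0
  obtain ⟨a, b⟩ := zeta_window t h0 h
  have p1 := Real.pi_gt_d4
  have p2 := Real.pi_lt_d4
  refine zeta_deriv_ne_zero t ?_ ?_ h
  · norm_num at p1; nlinarith
  · norm_num at p2 ⊢; nlinarith

end helpers

theorem kappa_deriv_formula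
    (Z ϑ Z' Z'' ϑ' ϑ'' κ κ' : ℝ → ℝ)
    (hZa : ∀ t : ℝ, AnalyticAt ℝ Z t) (hϑa : ∀ t : ℝ, AnalyticAt ℝ ϑ t)
    (hκa : ∀ t : ℝ, AnalyticAt ℝ κ t)
    (hRS : ∀ t : ℝ, riemannZeta (1 / 2 + Complex.I * (t : ℂ)) =
      (Z t : ℂ) * Complex.exp (-Complex.I * (ϑ t : ℂ)))
    (hZ' : ∀ t : ℝ, HasDerivAt Z (Z' t) t)
    (hZ'' : ∀ t : ℝ, HasDerivAt Z' (Z'' t) t)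
    (hϑ' : ∀ t : ℝ, HasDerivAt ϑ (ϑ' t) t)
    (hϑ'' : ∀ t : ℝ, HasDerivAt ϑ' (ϑ'' t) t)
    (hκ' : ∀ t : ℝ, HasDerivAt κ (κ' t) t)
    (hκ : ∀ t : ℝ, deriv riemannZeta (1 / 2 + Complex.I * (t : ℂ)) ≠ 0 →
      Complex.exp (2 * π * Complex.I * (κ t : ℂ)) =
        1 + 2 * (ϑ' t : ℂ) * riemannZeta (1 / 2 + Complex.I * (t : ℂ)) /
          deriv riemannZeta (1 / 2 + Complex.I * (t : ℂ)))
    (hκ0 : κ 0 = -(1 / 2))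
    (t : ℝ) (hnot : ¬(Z t = 0 ∧ Z' t = 0)) :
    π * κ' t =
      (Z t * Z' t * ϑ'' t + (Z' t) ^ 2 * ϑ' t - Z t * Z'' t * ϑ' t) /
        ((Z' t) ^ 2 + (Z t) ^ 2 * (ϑ' t) ^ 2) := by
  have hZd : ∀ x : ℝ, deriv riemannZeta (1 / 2 + Complex.I * (x : ℂ)) * Complex.I =
      ((Z' x : ℂ) - Complex.I * ϑ' x * Z x) * Complex.exp (-Complex.I * (ϑ x : ℂ)) := by
    intro x
    have hne : (1 / 2 + Complex.I * (x : ℂ)) ≠ 1 := by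
      intro h
      have := congrArg Complex.re h
      simp at this
    have a0 : HasDerivAt (fun z : ℂ => 1 / 2 + Complex.I * z) Complex.I (x : ℂ) := by
      simpa using ((hasDerivAt_id (x : ℂ)).const_mul Complex.I).const_add (1 / 2)
    have a1 := (HasDerivAt.comp (x : ℂ)
      (differentiableAt_riemannZeta hne).hasDerivAt a0).comp_ofReal
    have a2 := (hZ' x).ofReal_comp.mul (((hϑ' x).ofReal_comp.const_mul (-Complex.I)).cexp)
    have heq : (fun y : ℝ => (riemannZeta ∘ fun z : ℂ => 1 / 2 + Complex.I * z) (y : ℂ)) =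
        (fun y : ℝ => (Z y : ℂ) * Complex.exp (-Complex.I * (ϑ y : ℂ))) := by
      funext y; exact hRS y
    rw [heq] at a1
    have a3 := a1.unique a2
    rw [a3]; ring
  have hEne : ∀ x : ℝ, Complex.exp (-Complex.I * (ϑ x : ℂ)) ≠ 0 := fun x => Complex.exp_ne_zero _
  have hWt : (Z' t : ℂ) - Complex.I * ϑ' t * Z t ≠ 0 := by
    intro hW
    have h1 : deriv riemannZeta (1 / 2 + Complex.I * (t : ℂ)) = 0 := by
      have := hZd t
      rw [hW, zero_mul] at this
      exact (mul_eq_zero.1 this).resolve_right Complex.I_ne_zero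
    have h2 := zeta_deriv_key t h1
    rw [hRS t] at h2
    have h3 : Z t = 0 := by exact_mod_cast (mul_eq_zero.1 h2).resolve_right (hEne t)
    apply hnot
    refine ⟨h3, ?_⟩
    rw [h3] at hW
    simpa using hW
  have b1 : HasDerivAt (fun x : ℝ => (Z' x : ℂ) - Complex.I * ϑ' x * Z x)
      ((Z'' t : ℂ) - (Complex.I * ϑ'' t * Z t + Complex.I * ϑ' t * Z' t)) t :=
    (hZ'' t).ofReal_comp.sub (((hϑ'' t).ofReal_comp.const_mul Complex.I).mul (hZ' t).ofReal_comp)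
  have b2 : HasDerivAt (fun x : ℝ => (Z' x : ℂ) + Complex.I * ϑ' x * Z x)
      ((Z'' t : ℂ) + (Complex.I * ϑ'' t * Z t + Complex.I * ϑ' t * Z' t)) t :=
    (hZ'' t).ofReal_comp.add (((hϑ'' t).ofReal_comp.const_mul Complex.I).mul (hZ' t).ofReal_comp)
  have b3 := ((hκ' t).ofReal_comp.const_mul (2 * π * Complex.I)).cexp
  have b4 := b3.mul b1
  have hk : ∀ x : ℝ, (Z' x : ℂ) - Complex.I * ϑ' x * Z x ≠ 0 →
      Complex.exp (2 * π * Complex.I * (κ x : ℂ)) * ((Z' x : ℂ) - Complex.I * ϑ' x * Z x) =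
      (Z' x : ℂ) + Complex.I * ϑ' x * Z x := by
    intro x hx
    have hd : deriv riemannZeta (1 / 2 + Complex.I * (x : ℂ)) =
      -Complex.I * (((Z' x : ℂ) - Complex.I * ϑ' x * Z x)
        * Complex.exp (-Complex.I * (ϑ x : ℂ))) := by
      rw [← hZd x]
      linear_combination (deriv riemannZeta (1 / 2 + Complex.I * (x : ℂ))) * Complex.I_sq
    have hdne : deriv riemannZeta (1 / 2 + Complex.I * (x : ℂ)) ≠ 0 := by
      rw [hd]
      exact mul_ne_zero (neg_ne_zero.2 Complex.I_ne_zero) (mul_ne_zero hx (hEne x))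
    have h := hκ x hdne
    have hR := hRS x
    set S := deriv riemannZeta (1 / 2 + Complex.I * (x : ℂ))
    rw [h, hR]
    have hS : 2 * (ϑ' x : ℂ) * ((Z x : ℂ) * Complex.exp (-Complex.I * (ϑ x : ℂ))) / S
        * ((Z' x : ℂ) - Complex.I * ϑ' x * Z x) = 2 * Complex.I * ϑ' x * Z x := by
      rw [div_mul_eq_mul_div, div_eq_iff hdne, hd]
      linear_combination (2 * ϑ' x * Z x * (((Z' x : ℂ) - Complex.I * ϑ' x * Z x)
        * Complex.exp (-Complex.I * (ϑ x : ℂ)))) * Complex.I_sq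
    rw [add_mul, hS]; ring
  have hev := b1.continuousAt.eventually_ne hWt
  have b5 := b4.unique (b2.congr_of_eventuallyEq (by
    filter_upwards [hev] with x hx using hk x hx))
  have hkt := hk t hWt
  have hD : (Z' t) ^ 2 + (Z t) ^ 2 * (ϑ' t) ^ 2 ≠ 0 := by
    intro h0
    have p1 : Z' t = 0 := by nlinarith [sq_nonneg (Z' t), mul_nonneg (sq_nonneg (Z t)) (sq_nonneg (ϑ' t))]
    have p2 : Z t * ϑ' t = 0 := by
      have : (Z t * ϑ' t) ^ 2 = 0 := by rw [p1] at h0; nlinarith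
      exact pow_eq_zero_iff (two_ne_zero) |>.1 this
    apply hWt
    have p3 : (Z t : ℂ) * ϑ' t = 0 := by exact_mod_cast p2
    rw [p1]
    push_cast
    linear_combination -Complex.I * p3
  rw [eq_div_iff hD]
  have c : ((π * κ' t * ((Z' t) ^ 2 + (Z t) ^ 2 * (ϑ' t) ^ 2) : ℝ) : ℂ) =
      ((Z t * Z' t * ϑ'' t + (Z' t) ^ 2 * ϑ' t - Z t * Z'' t * ϑ' t : ℝ) : ℂ) := by
    have hI : (2 * Complex.I) ≠ 0 := mul_ne_zero two_ne_zero Complex.I_ne_zero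
    apply mul_left_cancel₀ hI
    push_cast
    set e := Complex.exp (2 * π * Complex.I * (κ t : ℂ))
    linear_combination (exp := 1) ((Z' t : ℂ) - Complex.I * ϑ' t * Z t) * b5
      - (2 * π * Complex.I * κ' t * ((Z' t : ℂ) - Complex.I * ϑ' t * Z t) +
         ((Z'' t : ℂ) - (Complex.I * ϑ'' t * Z t + Complex.I * ϑ' t * Z' t))) * hkt
      + (2 * π * Complex.I * κ' t * (ϑ' t : ℂ) ^ 2 * Z t ^ 2) * Complex.I_sq
  exact_mod_cast c
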